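/- Let H_0 = K_4^{(1)} (the complete graph on 4 vertices with one edge removed) or H_0 = K_4, and for each m ≥ 0 let H_{m+1} be the graph obtained from H_m by attaching a cycle C_{n_{m+1}} with n_{m+1} ≥ 3 to H_m along any common edge (identifying one edge of the cycle with an edge of H_m). Then for all m ≥ 0: H_{H_m} = ℕ ∪ [2,∞), H_{H_m}^ψ = (−1+2ℕ) ∪ [2,∞), and H_{H_m}^φ = 2ℕ ∪ [2,∞). In particular, CE_H(H_m) = CE_H^ψ(H_m) = CE_H^φ(H_m) = 2 for all m ≥ 0. -/

import Mathlib

open Set Matrix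

noncomputable section

/-- Entrywise power function `x ↦ x^α` on nonnegative reals, with the convention `0^α := 0`. -/
def powEnt (α x : ℝ) : ℝ := if x = 0 then 0 else x ^ α

/-- The odd extension `ψ_α(x) = sgn(x)|x|^α` of the power function, with `ψ_α(0) = 0`. -/
def psiF (α x : ℝ) : ℝ := Real.sign x * |x| ^ α

/-- The even extension `φ_α(x) = |x|^α` of the power function, with `φ_α(0) = 0`. -/
def phiF (α x : ℝ) : ℝ := if x = 0 then 0 else |x| ^ α

/-- `P_G(I)`: positive semidefinite matrices with entries in `I` and zeros outside
the edge pattern of `G`. -/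
def PsetG {V : Type*} [Fintype V] (G : SimpleGraph V) (I : Set ℝ) :
    Set (Matrix V V ℝ) :=
  {A | A.PosSemidef ∧ (∀ i j, A i j ∈ I) ∧ ∀ i j, i ≠ j → ¬ G.Adj i j → A i j = 0}

/-- `H_G`: the set of entrywise powers preserving `P_G([0,∞))`. -/
def HsetG {V : Type*} [Fintype V] (G : SimpleGraph V) : Set ℝ :=
  {α | ∀ A ∈ PsetG G (Ici (0 : ℝ)), A.map (powEnt α) ∈ PsetG G univ}

/-- `H_G^ψ`: the set of powers `α` such that `ψ_α` preserves `P_G(ℝ)`. -/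
def HsetPsi {V : Type*} [Fintype V] (G : SimpleGraph V) : Set ℝ :=
  {α | ∀ A ∈ PsetG G univ, A.map (psiF α) ∈ PsetG G univ}

/-- `H_G^φ`: the set of powers `α` such that `φ_α` preserves `P_G(ℝ)`. -/
def HsetPhi {V : Type*} [Fintype V] (G : SimpleGraph V) : Set ℝ :=
  {α | ∀ A ∈ PsetG G univ, A.map (phiF α) ∈ PsetG G univ}

/-- The set of which the critical exponent is the least element:
all `α` such that every `β ≥ α` lies in `H`. -/
def CEset (H : Set ℝ) : Set ℝ := {α | ∀ β, α ≤ β → β ∈ H}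

/-- The positive integers, as a set of reals. -/
def posNats : Set ℝ := {x | ∃ k : ℕ, 0 < k ∧ x = k}

/-- The odd positive integers `−1+2ℕ`, as a set of reals. -/
def oddNats : Set ℝ := {x | ∃ k : ℕ, 0 < k ∧ x = 2 * k - 1}

/-- The even positive integers `2ℕ`, as a set of reals. -/
def evenNats : Set ℝ := {x | ∃ k : ℕ, 0 < k ∧ x = 2 * k}

/-- `addPath G v₁ v₂ t`: the graph `G` together with an added path from `v₁` to `v₂` having
`t` new internal vertices (hence `t + 1` edges); for `t = 0` this adds the edge `v₁v₂`.
Thus `G_m(v₁,v₂)` of the paper is `addPath G v₁ v₂ (m−1)`. -/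
def addPath {V : Type*} (G : SimpleGraph V) (v₁ v₂ : V) (t : ℕ) :
    SimpleGraph (V ⊕ Fin t) :=
  SimpleGraph.fromRel (fun x y =>
    match x, y with
    | Sum.inl a, Sum.inl b => G.Adj a b ∨ (t = 0 ∧ a = v₁ ∧ b = v₂)
    | Sum.inl a, Sum.inr i => (a = v₁ ∧ (i : ℕ) = 0) ∨ (a = v₂ ∧ (i : ℕ) = t - 1)
    | Sum.inr i, Sum.inr j => (j : ℕ) = (i : ℕ) + 1
    | Sum.inr _, Sum.inl _ => False)

/-- Graphs obtained from `G₀` by repeatedly attaching a cycle `C_p` (`p ≥ 3`) along an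
existing edge `(a,b)`: the `p − 2` new vertices form a path from `a` to `b` which, together
with the edge `(a,b)`, forms the attached cycle. -/
inductive AttachCycles {V₀ : Type} (G₀ : SimpleGraph V₀) : ∀ {W : Type}, SimpleGraph W → Prop
  | base : AttachCycles G₀ G₀
  | attach : ∀ {W : Type} (G : SimpleGraph W) (a b : W) (p : ℕ),
      3 ≤ p → G.Adj a b → AttachCycles G₀ G → AttachCycles G₀ (addPath G a b (p - 2))

section Powers

/-- The odd (`s = true`) or even (`s = false`) extension of the power function. -/
def extPow (s : Bool) (α x : ℝ) : ℝ := bif s then psiF α x else phiF α x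

lemma extPow_zero (s : Bool) (α : ℝ) : extPow s α 0 = 0 := by
  cases s <;> simp [extPow, psiF, phiF]

lemma psiF_zero (α : ℝ) : psiF α 0 = 0 := extPow_zero true α

lemma phiF_zero (α : ℝ) : phiF α 0 = 0 := extPow_zero false α

lemma extPow_of_pos (s : Bool) (α : ℝ) {x : ℝ} (hx : 0 < x) : extPow s α x = x ^ α := by
  cases s <;> simp [extPow, psiF, phiF, Real.sign_of_pos hx, abs_of_pos hx, hx.ne']

lemma extPow_nonneg (s : Bool) (α : ℝ) {x : ℝ} (hx : 0 ≤ x) : 0 ≤ extPow s α x := by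
  rcases hx.eq_or_lt with rfl | hx
  · rw [extPow_zero]
  · rw [extPow_of_pos s α hx]; positivity

lemma extPow_of_nonneg (s : Bool) {α : ℝ} (hα : 0 < α) {x : ℝ} (hx : 0 ≤ x) :
    extPow s α x = x ^ α := by
  rcases hx.eq_or_lt with rfl | hx
  · rw [extPow_zero, Real.zero_rpow hα.ne']
  · exact extPow_of_pos s α hx

lemma extPow_le (s : Bool) {α : ℝ} (hα : 0 < α) {x y : ℝ} (hx : 0 ≤ x) (hxy : x ≤ y) :
    extPow s α x ≤ extPow s α y := by
  rw [extPow_of_nonneg s hα hx, extPow_of_nonneg s hα (hx.trans hxy)]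
  exact Real.rpow_le_rpow hx hxy hα.le

lemma real_sign_mul (x y : ℝ) : Real.sign (x * y) = Real.sign x * Real.sign y := by
  rcases lt_trichotomy x 0 with hx | rfl | hx <;> rcases lt_trichotomy y 0 with hy | rfl | hy <;>
    simp [Real.sign_of_pos, Real.sign_of_neg, mul_pos_of_neg_of_neg, mul_neg_of_neg_of_pos,
      mul_neg_of_pos_of_neg, *]

lemma extPow_mul (s : Bool) (α x y : ℝ) :
    extPow s α (x * y) = extPow s α x * extPow s α y := by
  cases s
  · by_cases hx : x = 0 <;> by_cases hy : y = 0 <;>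
      simp [extPow, phiF, hx, hy, abs_mul, Real.mul_rpow]
  · simp only [extPow, psiF, cond_true, real_sign_mul, abs_mul,
      Real.mul_rpow (abs_nonneg x) (abs_nonneg y)]
    ring

lemma extPow_div (s : Bool) (α x y : ℝ) :
    extPow s α (x / y) = extPow s α x / extPow s α y := by
  rcases eq_or_ne y 0 with rfl | hy
  · simp [extPow_zero]
  have h0 : extPow s α y ≠ 0 := by
    have h1 : extPow s α y * extPow s α y⁻¹ = 1 := by
      rw [← extPow_mul, mul_inv_cancel₀ hy, extPow_of_pos s α one_pos, Real.one_rpow]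
    exact left_ne_zero_of_mul_eq_one h1
  rw [eq_div_iff h0, ← extPow_mul, div_mul_cancel₀ _ hy]

lemma extPow_false_eq {α : ℝ} (hα : 0 < α) (x : ℝ) : extPow false α x = |x| ^ α := by
  rcases eq_or_ne x 0 with rfl | hx
  · simp [extPow_zero, Real.zero_rpow hα.ne']
  · simp [extPow, phiF, hx]

lemma mul_abs_rpow_sub_one (α x : ℝ) : x * |x| ^ (α - 1) = extPow true α x := by
  rcases lt_trichotomy x 0 with hx | rfl | hx
  · simp only [extPow, psiF, cond_true, Real.sign_of_neg hx]
    rw [Real.rpow_sub_one (abs_pos.2 hx.ne).ne', abs_of_neg hx]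
    field_simp [hx.ne]
  · simp [extPow_zero]
  · simp only [extPow, psiF, cond_true, Real.sign_of_pos hx]
    rw [Real.rpow_sub_one (abs_pos.2 hx.ne').ne', abs_of_pos hx]
    field_simp

lemma hasDerivAt_extPow (s : Bool) {α : ℝ} (hα : 1 < α) (x : ℝ) :
    HasDerivAt (extPow s α) (α * extPow (!s) (α - 1) x) x := by
  cases s
  · have h := hasDerivAt_abs_rpow x hα
    have h2 : extPow false α = fun x : ℝ => |x| ^ α := funext (extPow_false_eq (by linarith))
    rw [h2, Bool.not_false, ← mul_abs_rpow_sub_one]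
    convert h using 1
    rw [show α - 1 - 1 = α - 2 by ring]
    ring
  · have h2 : extPow true α = fun x : ℝ => x * |x| ^ (α - 1) :=
      funext fun x => (mul_abs_rpow_sub_one α x).symm
    rw [h2, Bool.not_true, extPow_false_eq (by linarith)]
    rcases eq_or_ne x 0 with rfl | hx
    · rw [hasDerivAt_iff_tendsto_slope]
      have hc : ContinuousAt (fun x : ℝ => |x| ^ (α - 1)) 0 :=
        continuous_abs.continuousAt.rpow_const (Or.inr (by linarith))
      have h3 := hc.tendsto.mono_left (nhdsWithin_le_nhds (s := {(0 : ℝ)}ᶜ))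
      simp only [abs_zero, Real.zero_rpow (show α - 1 ≠ 0 by linarith)] at h3 ⊢
      rw [mul_zero]
      refine h3.congr' ?_
      filter_upwards [self_mem_nhdsWithin] with y hy
      have hy : y ≠ 0 := hy
      simp [slope_def_field, hy]
    · have h4 := (hasDerivAt_abs hx).rpow_const (p := α - 1) (Or.inl (abs_pos.2 hx).ne')
      have h5 := (hasDerivAt_id x).mul h4
      refine h5.congr_deriv ?_
      have hx' := abs_pos.2 hx
      rw [Real.rpow_sub_one hx'.ne' (α - 1)]
      rcases lt_or_gt_of_ne hx with h | h
      · simp only [h, sign_neg, abs_of_neg, id]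
        simp only [SignType.coe_one, SignType.coe_neg]
        field_simp [h.ne]
        ring
      · simp only [h, sign_pos, abs_of_pos, id]
        simp only [SignType.coe_one]
        field_simp
        ring

lemma continuousAt_extPow_exponent (s : Bool) (x α : ℝ) :
    ContinuousAt (fun β => extPow s β x) α := by
  rcases eq_or_ne x 0 with rfl | hx
  · simp only [extPow_zero]; exact continuousAt_const
  · have h : ContinuousAt (fun β : ℝ => |x| ^ β) α :=
      (Real.continuous_const_rpow (abs_pos.2 hx).ne').continuousAt
    cases s
    · simpa [extPow, phiF, hx] using h
    · simpa [extPow, psiF] using h.const_mul (Real.sign x)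

end Powers

section QuadraticForms

variable {U : Type*}

lemma _root_.Matrix.PosSemidef.symm_apply {M : Matrix U U ℝ} (h : M.PosSemidef) (i j : U) :
    M j i = M i j := by
  simpa using h.1.apply i j

lemma _root_.Matrix.PosSemidef.sq_apply_le {M : Matrix U U ℝ} (h : M.PosSemidef) (i j : U) :
    M i j ^ 2 ≤ M i i * M j j := by
  have := (h.submatrix ![i, j]).det_nonneg
  rw [Matrix.det_fin_two] at this
  simp [h.symm_apply i j] at this
  nlinarith

/-- The Schur complement of the entry at `none`. -/
def schurNone (M : Matrix (Option U) (Option U) ℝ) : Matrix U U ℝ :=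
  Matrix.of fun i j => M (some i) (some j) - M none (some i) * M none (some j) / M none none

variable [Fintype U]

lemma posSemidef_iff_sum {M : Matrix U U ℝ} :
    M.PosSemidef ↔ (∀ i j, M j i = M i j) ∧ ∀ x : U → ℝ, 0 ≤ ∑ i, ∑ j, x i * M i j * x j := by
  rw [Matrix.posSemidef_iff_dotProduct_mulVec, Matrix.IsHermitian.ext_iff]
  simp [dotProduct, Matrix.mulVec, Finset.mul_sum, mul_assoc]

lemma sum_option_eq {M : Matrix (Option U) (Option U) ℝ}
    (hs : ∀ i, M (some i) none = M none (some i)) (hd : M none none ≠ 0) (x : Option U → ℝ) :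
    ∑ i, ∑ j, x i * M i j * x j = ∑ i, ∑ j, x (some i) * schurNone M i j * x (some j) +
      M none none * (x none + (∑ i, M none (some i) * x (some i)) / M none none) ^ 2 := by
  have h1 : ∑ i, ∑ j, x (some i) * schurNone M i j * x (some j) =
      ∑ i, ∑ j, x (some i) * M (some i) (some j) * x (some j) -
        (∑ i, M none (some i) * x (some i)) * (∑ i, M none (some i) * x (some i)) /
          M none none := by
    rw [Finset.sum_mul_sum, Finset.sum_div, ← Finset.sum_sub_distrib]
    refine Finset.sum_congr rfl fun i _ => ?_
    rw [Finset.sum_div, ← Finset.sum_sub_distrib]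
    refine Finset.sum_congr rfl fun j _ => ?_
    simp only [schurNone, Matrix.of_apply]
    ring
  have h2 : ∑ j, x none * M none (some j) * x (some j) =
      x none * ∑ i, M none (some i) * x (some i) := by
    rw [Finset.mul_sum]
    exact Finset.sum_congr rfl fun i _ => by ring
  have h3 : ∑ i, x (some i) * M (some i) none * x none =
      x none * ∑ i, M none (some i) * x (some i) := by
    rw [Finset.mul_sum]
    exact Finset.sum_congr rfl fun i _ => by rw [hs]; ring
  simp only [Fintype.sum_option, Finset.sum_add_distrib]
  rw [h1, h2, h3]
  field_simp
  ring

lemma _root_.Matrix.PosSemidef.schurNone {M : Matrix (Option U) (Option U) ℝ}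
    (h : M.PosSemidef) : (schurNone M).PosSemidef := by
  rcases eq_or_ne (M none none) 0 with hd | hd
  · convert h.submatrix some
    ext i j
    simp [_root_.schurNone, hd]
  refine posSemidef_iff_sum.2 ⟨fun i j => ?_, fun x => ?_⟩
  · simp [_root_.schurNone, h.symm_apply (some i) (some j), mul_comm]
  · have := (posSemidef_iff_sum.1 h).2
      (fun o => o.elim (-(∑ i, M none (some i) * x i) / M none none) x)
    rw [sum_option_eq (fun i => h.symm_apply _ _) hd] at this
    simpa [neg_div] using this

lemma posSemidef_of_schurNone {M : Matrix (Option U) (Option U) ℝ}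
    (hs : ∀ i, M (some i) none = M none (some i)) (hd : 0 ≤ M none none)
    (h0 : M none none = 0 → ∀ i, M none (some i) = 0) (h : (schurNone M).PosSemidef) :
    M.PosSemidef := by
  rw [posSemidef_iff_sum] at h ⊢
  refine ⟨?_, fun x => ?_⟩
  · rintro (_ | i) (_ | j)
    · rfl
    · exact hs j
    · exact (hs i).symm
    · have := h.1 i j
      simp only [schurNone, Matrix.of_apply] at this
      rw [mul_comm (M none (some j))] at this
      linarith
  · rcases hd.eq_or_lt with hd | hd
    · have hb := h0 hd.symm
      have := h.2 (fun i => x (some i))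
      simpa [Fintype.sum_option, hs, hb, ← hd, schurNone] using this
    · rw [sum_option_eq hs hd.ne']
      have := h.2 (fun i => x (some i))
      positivity

lemma posSemidef_of_submatrix {K : Type*} [Fintype K] {e : K → U} (he : Function.Injective e)
    {M : Matrix U U ℝ} (hsupp : ∀ u v, M u v ≠ 0 → u ∈ range e ∧ v ∈ range e)
    (h : (M.submatrix e e).PosSemidef) : M.PosSemidef := by
  rw [posSemidef_iff_sum] at h ⊢
  have hz : ∀ u v, (u ∉ range e ∨ v ∉ range e) → M u v = 0 := fun u v huv => by
    by_contra hne
    have := hsupp u v hne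
    tauto
  refine ⟨fun u v => ?_, fun x => ?_⟩
  · by_cases huv : u ∈ range e ∧ v ∈ range e
    · obtain ⟨⟨i, rfl⟩, ⟨j, rfl⟩⟩ := huv
      exact h.1 i j
    · rw [hz u v (by tauto), hz v u (by tauto)]
  · refine (h.2 (x ∘ e)).trans_eq ?_
    refine Fintype.sum_of_injective e he _ _ (fun u hu => ?_) (fun i => ?_)
    · exact Finset.sum_eq_zero fun v _ => by rw [hz u v (Or.inl hu)]; ring
    · refine Fintype.sum_of_injective e he _ _ (fun v hv => ?_) (fun j => rfl)
      rw [hz _ v (Or.inr hv)]; ring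

lemma posSemidef_sub_of_hasDerivAt {N N' : ℝ → Matrix U U ℝ}
    (hN : ∀ t i j, HasDerivAt (fun t => N t i j) (N' t i j) t)
    (hsymm : ∀ t i j, N t j i = N t i j) (hpos : ∀ t, 0 ≤ t → (N' t).PosSemidef) :
    (N 1 - N 0).PosSemidef := by
  refine posSemidef_iff_sum.2 ⟨fun i j => ?_, fun x => ?_⟩
  · simp [hsymm]
  · have hd : ∀ t, HasDerivAt (fun t => ∑ i, ∑ j, x i * N t i j * x j)
        (∑ i, ∑ j, x i * N' t i j * x j) t := fun t =>
      HasDerivAt.fun_sum fun i _ => HasDerivAt.fun_sum fun j _ =>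
        ((hN t i j).const_mul (x i)).mul_const (x j)
    have hm : MonotoneOn (fun t => ∑ i, ∑ j, x i * N t i j * x j) (Ici 0) := by
      refine monotoneOn_of_deriv_nonneg (convex_Ici 0)
        (fun t _ => (hd t).continuousAt.continuousWithinAt)
        (fun t _ => (hd t).differentiableAt.differentiableWithinAt) fun t ht => ?_
      rw [interior_Ici] at ht
      rw [(hd t).deriv]
      exact (posSemidef_iff_sum.1 (hpos t (le_of_lt ht))).2 x
    have := hm (by simp : (0 : ℝ) ∈ Ici 0) (by simp : (1 : ℝ) ∈ Ici 0) zero_le_one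
    simp only [Matrix.sub_apply, mul_sub, sub_mul, Finset.sum_sub_distrib]
    simpa using this

end QuadraticForms

section LoewnerProperties

/-- Both extended powers with exponent `α` preserve positive semidefiniteness on index set `U`. -/
def PowPreserves (U : Type*) (α : ℝ) : Prop :=
  ∀ (s : Bool) (A : Matrix U U ℝ), A.PosSemidef → (A.map (extPow s α)).PosSemidef

/-- Both extended powers with exponent `α` are Loewner monotone on index set `U`. -/
def PowMonotone (U : Type*) (α : ℝ) : Prop :=
  ∀ (s : Bool) (A D : Matrix U U ℝ), A.PosSemidef → D.PosSemidef →
    ((A + D).map (extPow s α) - A.map (extPow s α)).PosSemidef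

/-- Both extended powers with exponent `α` are Loewner superadditive on index set `U`. -/
def PowSuperadditive (U : Type*) (α : ℝ) : Prop :=
  ∀ (s : Bool) (A D : Matrix U U ℝ), A.PosSemidef → D.PosSemidef →
    ((A + D).map (extPow s α) - A.map (extPow s α) - D.map (extPow s α)).PosSemidef

variable {U : Type*} [Fintype U] {α : ℝ}

lemma PowPreserves.powMonotone (hα : 1 < α) (h : PowPreserves U (α - 1)) : PowMonotone U α := by
  intro s A D hA hD
  have := posSemidef_sub_of_hasDerivAt (N := fun t => (A + t • D).map (extPow s α))
    (N' := fun t => α • (D ⊙ (A + t • D).map (extPow (!s) (α - 1)))) ?_ ?_ ?_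
  · simpa using this
  · intro t i j
    have h1 : HasDerivAt (fun t => A i j + t * D i j) (D i j) t := by
      simpa using ((hasDerivAt_id t).mul_const (D i j)).const_add (A i j)
    refine ((hasDerivAt_extPow s hα _).comp t h1).congr_deriv ?_
    simp [Matrix.hadamard]
    ring
  · intro t i j
    simp [hA.symm_apply i j, hD.symm_apply i j]
  · intro t ht
    exact (hD.hadamard (h _ _ (hA.add (hD.smul ht)))).smul (by linarith : (0 : ℝ) ≤ α)

lemma PowMonotone.powSuperadditive (hα : 1 < α) (h : PowMonotone U (α - 1)) :
    PowSuperadditive U α := by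
  intro s A D hA hD
  have := posSemidef_sub_of_hasDerivAt
    (N := fun t => (t • D + A).map (extPow s α) - (t • D).map (extPow s α))
    (N' := fun t => α • (D ⊙ ((t • D + A).map (extPow (!s) (α - 1)) -
      (t • D).map (extPow (!s) (α - 1))))) ?_ ?_ ?_
  · convert this using 1
    ext i j
    simp [extPow_zero, add_comm]
    ring
  · intro t i j
    have h1 : HasDerivAt (fun t => t * D i j) (D i j) t := by
      simpa using (hasDerivAt_id t).mul_const (D i j)
    have h2 := h1.add_const (A i j)
    refine (((hasDerivAt_extPow s hα _).comp t h2).sub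
      ((hasDerivAt_extPow s hα _).comp t h1)).congr_deriv ?_
    simp [Matrix.hadamard]
    ring
  · intro t i j
    simp [hA.symm_apply i j, hD.symm_apply i j]
  · intro t ht
    exact (hD.hadamard (h _ _ _ (hD.smul ht) hA)).smul (by linarith : (0 : ℝ) ≤ α)

/-- The rank-one matrix subtracted in the Schur complement of the entry at `none`. -/
def schurRankOne {U : Type*} (M : Matrix (Option U) (Option U) ℝ) : Matrix U U ℝ :=
  Matrix.of fun i j => M none (some i) * M none (some j) / M none none

lemma posSemidef_schurRankOne {M : Matrix (Option U) (Option U) ℝ} (h : M.PosSemidef) :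
    (schurRankOne M).PosSemidef := by
  have h1 := (Matrix.posSemidef_vecMulVec_self_star (fun i => M none (some i))).smul
    (inv_nonneg.2 (h.diag_nonneg (i := none)))
  convert h1 using 1
  ext i j
  simp [schurRankOne, Matrix.vecMulVec_apply]
  ring

/-- To show that an extended power of `M` is positive semidefinite it suffices to compare the
powers of its Schur summands. -/
lemma posSemidef_map_extPow_of_schur {M : Matrix (Option U) (Option U) ℝ} (hM : M.PosSemidef)
    (s : Bool) (α : ℝ)
    (h : ((schurRankOne M + schurNone M).map (extPow s α) -
      (schurRankOne M).map (extPow s α)).PosSemidef) :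
    (M.map (extPow s α)).PosSemidef := by
  refine posSemidef_of_schurNone (fun i => ?_) ?_ (fun h0 i => ?_) ?_
  · simp [hM.symm_apply none (some i)]
  · exact extPow_nonneg s α hM.diag_nonneg
  · have hd : M none none = 0 := by
      by_contra hne
      have hpos := lt_of_le_of_ne hM.diag_nonneg (Ne.symm hne)
      simp only [Matrix.map_apply, extPow_of_pos s α hpos] at h0
      exact (Real.rpow_pos_of_pos hpos α).ne' h0
    have := hM.sq_apply_le none (some i)
    rw [hd, zero_mul] at this
    have hb : M none (some i) = 0 := pow_eq_zero_iff two_ne_zero |>.1 (this.antisymm (sq_nonneg _))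
    rw [Matrix.map_apply, hb, extPow_zero]
  · convert h using 1
    ext i j
    simp [schurNone, schurRankOne, extPow_mul, extPow_div]

lemma PowMonotone.powPreserves_option (h : PowMonotone U α) : PowPreserves (Option U) α :=
  fun s _ hM => posSemidef_map_extPow_of_schur hM s α
    (h s _ _ (posSemidef_schurRankOne hM) hM.schurNone)

lemma powMonotone_unit (hα : 0 < α) : PowMonotone Unit α := by
  intro s A D hA hD
  refine posSemidef_iff_sum.2 ⟨fun _ _ => rfl, fun x => ?_⟩
  have h1 := extPow_le s hα (hA.diag_nonneg (i := ()))
    (le_add_of_nonneg_right (hD.diag_nonneg (i := ())))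
  simp only [Finset.univ_unique, Finset.sum_singleton, PUnit.default_eq_unit, Matrix.sub_apply,
    Matrix.map_apply, Matrix.add_apply]
  nlinarith [mul_nonneg (sub_nonneg.2 h1) (mul_self_nonneg (x ()))]

lemma powMonotone_option_unit (hα : 1 < α) : PowMonotone (Option Unit) α :=
  (powMonotone_unit (by linarith)).powPreserves_option.powMonotone hα

lemma powSuperadditive_option_unit (hα : 2 < α) : PowSuperadditive (Option Unit) α :=
  (powMonotone_option_unit (by linarith)).powSuperadditive (by linarith)

lemma powPreserves_fin_four (hα : 2 < α) : PowPreserves (Fin 4) α := by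
  have h : PowPreserves (Option (Option (Option Unit))) α :=
    ((powMonotone_option_unit (by linarith)).powPreserves_option.powMonotone
      (by linarith)).powPreserves_option
  intro s A hA
  let e : Option (Option (Option Unit)) ≃ Fin 4 := Fintype.equivFinOfCardEq rfl
  have := (h s _ (hA.submatrix e)).submatrix e.symm
  simpa [Matrix.submatrix_map, Matrix.submatrix_submatrix] using this

end LoewnerProperties

section Graphs

/-- The entrywise function `f` preserves positive semidefiniteness of the matrices with
sparsity pattern `G`. -/
def PreservesPattern {V : Type*} (f : ℝ → ℝ) (G : SimpleGraph V) : Prop :=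
  ∀ A : Matrix V V ℝ, A.PosSemidef → (∀ i j, i ≠ j → ¬ G.Adj i j → A i j = 0) →
    (A.map f).PosSemidef

lemma PreservesPattern.of_bijective {V U : Type*} {f : ℝ → ℝ} {G : SimpleGraph V}
    {H : SimpleGraph U} {e : U → V} (he : Function.Bijective e)
    (hadj : ∀ i j, G.Adj (e i) (e j) → H.Adj i j) (hH : PreservesPattern f H) :
    PreservesPattern f G := by
  intro A hA hz
  have h := hH (A.submatrix e e) (hA.submatrix e) fun i j hij hn =>
    hz _ _ (he.1.ne hij) fun hG => hn (hadj i j hG)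
  have := h.submatrix (Equiv.ofBijective e he).symm
  convert this using 1
  ext u v
  simp [Equiv.ofBijective_apply_symm_apply e he]

/-- Eliminating a vertex all of whose neighbours are among the endpoints of an edge. -/
lemma PreservesPattern.of_schurNone {U : Type*} [Fintype U] {α : ℝ} (hα : 2 < α) (s : Bool)
    {G : SimpleGraph (Option U)} {H : SimpleGraph U} {x y : U} (hxy : H.Adj x y)
    (hnone : ∀ i, G.Adj none (some i) → i = x ∨ i = y)
    (hsome : ∀ i j, G.Adj (some i) (some j) → H.Adj i j)
    (hH : PreservesPattern (extPow s α) H) : PreservesPattern (extPow s α) G := by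
  intro A hA hz
  have hb : ∀ i, A none (some i) ≠ 0 → i = x ∨ i = y := fun i hi => by
    by_contra hne
    exact hi (hz _ _ (by simp) fun hG => hne (hnone i hG))
  have hB : ∀ i j, schurRankOne A i j ≠ 0 → (i = x ∨ i = y) ∧ (j = x ∨ j = y) := by
    intro i j hij
    constructor
    · exact hb i fun h0 => hij (by simp [schurRankOne, h0])
    · exact hb j fun h0 => hij (by simp [schurRankOne, h0])
  have hR : ((schurNone A).map (extPow s α)).PosSemidef := by
    refine hH _ hA.schurNone fun i j hij hn => ?_
    have h1 : A (some i) (some j) = 0 := hz _ _ (by simpa using hij) fun hG => hn (hsome i j hG)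
    have h2 : schurRankOne A i j = 0 := by
      by_contra hne
      obtain ⟨rfl | rfl, rfl | rfl⟩ := hB i j hne
      · exact hij rfl
      · exact hn hxy
      · exact hn hxy.symm
      · exact hij rfl
    have h3 : schurNone A i j = A (some i) (some j) - schurRankOne A i j := rfl
    rw [h3, h1, h2, sub_zero]
  refine posSemidef_map_extPow_of_schur hA s α ?_
  let e : Option Unit → U := fun o => o.elim x fun _ => y
  have he : Function.Injective e := by
    rintro (_ | _) (_ | _) h
    · rfl
    · exact absurd h hxy.ne
    · exact absurd h hxy.ne'
    · rfl
  have hrange : ∀ i, i = x ∨ i = y → i ∈ range e := by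
    rintro i (rfl | rfl)
    · exact ⟨none, rfl⟩
    · exact ⟨some (), rfl⟩
  have hE := posSemidef_of_submatrix he
    (M := (schurRankOne A + schurNone A).map (extPow s α) - (schurRankOne A).map (extPow s α) -
      (schurNone A).map (extPow s α))
    (fun u v huv => by
      have h1 : schurRankOne A u v ≠ 0 := fun h0 => huv (by simp [h0, extPow_zero])
      exact ⟨hrange u (hB u v h1).1, hrange v (hB u v h1).2⟩)
    (powSuperadditive_option_unit hα s _ _ ((posSemidef_schurRankOne hA).submatrix e)
      (hA.schurNone.submatrix e))
  simpa using hE.add hR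

lemma PreservesPattern.addPath {V : Type*} [Fintype V] {α : ℝ} (hα : 2 < α) (s : Bool)
    {G : SimpleGraph V} {a b : V} (hab : G.Adj a b) (hG : PreservesPattern (extPow s α) G)
    (t : ℕ) : PreservesPattern (extPow s α) (addPath G a b t) := by
  induction t with
  | zero =>
    refine hG.of_bijective (e := Sum.inl) ⟨Sum.inl_injective, ?_⟩ fun i j h => ?_
    · rintro (v | i)
      · exact ⟨v, rfl⟩
      · exact i.elim0
    · simp only [_root_.addPath, SimpleGraph.fromRel_adj] at h
      rcases h.2 with (h | ⟨-, rfl, rfl⟩) | (h | ⟨-, rfl, rfl⟩)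
      exacts [h, hab, h.symm, hab.symm]
  | succ t ih =>
    let e : Option (V ⊕ Fin t) → V ⊕ Fin (t + 1) := fun o =>
      o.elim (Sum.inr (Fin.last t)) (Sum.map id Fin.castSucc)
    have he : Function.Bijective e := by
      constructor
      · rintro (_ | v | i) (_ | w | j) h <;> simp [e, Fin.ext_iff] at h ⊢
        · exact absurd h j.2.ne'
        · exact h
        · exact absurd h i.2.ne
        · exact h
      · rintro (v | i)
        · exact ⟨some (Sum.inl v), rfl⟩
        · induction i using Fin.lastCases with
          | last => exact ⟨none, rfl⟩
          | cast i => exact ⟨some (Sum.inr i), rfl⟩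
    have key : ∃ y, (_root_.addPath G a b t).Adj (Sum.inl b) y ∧
        ∀ i, (_root_.addPath G a b (t + 1)).Adj (e none) (e (some i)) →
          i = Sum.inl b ∨ i = y := by
      cases t with
      | zero =>
        refine ⟨Sum.inl a, ?_, ?_⟩
        · simp [_root_.addPath, SimpleGraph.fromRel_adj, hab.ne', hab.symm]
        · rintro (v | i) h
          · simp [_root_.addPath, SimpleGraph.fromRel_adj, e] at h
            tauto
          · exact i.elim0
      | succ k =>
        refine ⟨Sum.inr (Fin.last k), ?_, ?_⟩
        · simp [_root_.addPath, SimpleGraph.fromRel_adj]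
        · rintro (v | i) h
          · simp [_root_.addPath, SimpleGraph.fromRel_adj, e] at h
            tauto
          · simp [_root_.addPath, SimpleGraph.fromRel_adj, e] at h
            have := i.2
            right
            congr 1
            ext
            simp
            omega
    obtain ⟨y, hy, hnone⟩ := key
    refine PreservesPattern.of_bijective (H := (_root_.addPath G a b (t + 1)).comap e) he
      (fun _ _ h => h) ?_
    refine PreservesPattern.of_schurNone hα s hy hnone ?_ ih
    rintro (v | i) (w | j) h <;>
      simp only [_root_.addPath, SimpleGraph.comap_adj, SimpleGraph.fromRel_adj, e, Option.elim_some,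
        Sum.map_inl, Sum.map_inr, id, Fin.val_castSucc, ne_eq, Sum.inl.injEq, Sum.inr.injEq,
        Fin.ext_iff, reduceCtorEq, not_false_eq_true, true_and] at h ⊢
    · tauto
    · rcases h with (h | ⟨-, h⟩) | h
      · exact Or.inl (Or.inl h)
      · exact absurd h j.2.ne
      · exact h.elim
    · rcases h with h | (h | ⟨-, h⟩)
      · exact h.elim
      · exact Or.inr (Or.inl h)
      · exact absurd h i.2.ne
    · tauto

lemma AttachCycles.preservesPattern {α : ℝ} (hα : 2 < α) (s : Bool) {H₀ : SimpleGraph (Fin 4)}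
    {W : Type} {G : SimpleGraph W} (h : AttachCycles H₀ G) :
    PreservesPattern (extPow s α) G := by
  suffices Finite W ∧ PreservesPattern (extPow s α) G from this.2
  induction h with
  | base => exact ⟨inferInstance, fun A hA _ => powPreserves_fin_four hα s A hA⟩
  | attach G a b p _ hab _ ih =>
    obtain ⟨_, ih⟩ := ih
    have := Fintype.ofFinite
    exact ⟨inferInstance, ih.addPath hα s hab _⟩

lemma AttachCycles.preservesPattern_of_two_le {α : ℝ} (hα : 2 ≤ α) (s : Bool)
    {H₀ : SimpleGraph (Fin 4)} {W : Type} [Fintype W] {G : SimpleGraph W}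
    (h : AttachCycles H₀ G) : PreservesPattern (extPow s α) G := by
  intro A hA hz
  refine posSemidef_iff_sum.2 ⟨fun i j => by simp [hA.symm_apply i j], fun x => ?_⟩
  have hc : ContinuousAt (fun β => ∑ i, ∑ j, x i * A.map (extPow s β) i j * x j) α := by
    refine tendsto_finsetSum _ fun i _ => tendsto_finsetSum _ fun j _ => ?_
    exact ((continuousAt_extPow_exponent s (A i j) α).const_mul (x i)).mul_const (x j)
  refine ge_of_tendsto (hc.tendsto.mono_left (nhdsWithin_le_nhds (s := Ioi α))) ?_
  filter_upwards [self_mem_nhdsWithin] with β hβ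
  exact (posSemidef_iff_sum.1 (h.preservesPattern (lt_of_le_of_lt hα hβ) s A hA hz)).2 x

lemma AttachCycles.exists_embedding {V₀ W : Type} {H₀ : SimpleGraph V₀} {G : SimpleGraph W}
    (h : AttachCycles H₀ G) :
    ∃ e : V₀ → W, Function.Injective e ∧ ∀ i j, H₀.Adj i j → G.Adj (e i) (e j) := by
  induction h with
  | base => exact ⟨id, Function.injective_id, fun _ _ h => h⟩
  | attach G a b p _ _ _ ih =>
    obtain ⟨e, he, hadj⟩ := ih
    refine ⟨Sum.inl ∘ e, Sum.inl_injective.comp he, fun i j hij => ?_⟩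
    have := hadj i j hij
    simp [addPath, SimpleGraph.fromRel_adj, this, this.ne]

end Graphs

section Counterexamples

lemma exists_posSemidef_extension {K U : Type*} [Fintype K] [Fintype U] {e : K → U}
    (he : Function.Injective e) {A : Matrix K K ℝ} (hA : A.PosSemidef) :
    ∃ B : Matrix U U ℝ, B.PosSemidef ∧ B.submatrix e e = A ∧
      ∀ u v, B u v ≠ 0 → u ∈ range e ∧ v ∈ range e := by
  have hinj : Function.Injective (Prod.map e e) := he.prodMap he
  let B : Matrix U U ℝ := fun u v =>
    Function.extend (Prod.map e e) (fun p : K × K => A p.1 p.2) 0 (u, v)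
  have hsub : B.submatrix e e = A := by
    ext i j
    exact hinj.extend_apply (fun p : K × K => A p.1 p.2) 0 (i, j)
  have hsupp : ∀ u v, B u v ≠ 0 → u ∈ range e ∧ v ∈ range e := by
    intro u v huv
    by_contra hne
    refine huv (Function.extend_apply' _ _ _ ?_)
    rintro ⟨⟨i, j⟩, hij⟩
    obtain ⟨rfl, rfl⟩ := Prod.mk.inj hij
    exact hne ⟨⟨i, rfl⟩, ⟨j, rfl⟩⟩
  exact ⟨B, posSemidef_of_submatrix he hsupp (hsub ▸ hA), hsub, hsupp⟩

/-- `G` contains a copy of the complete graph on four vertices with the edge `03` removed. -/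
def ContainsAlmostK4 {W : Type*} (G : SimpleGraph W) : Prop :=
  ∃ e : Fin 4 → W, Function.Injective e ∧
    ∀ i j, i ≠ j → s(i, j) ≠ s(0, 3) → G.Adj (e i) (e j)

lemma AttachCycles.containsAlmostK4 {H₀ : SimpleGraph (Fin 4)}
    (hH₀ : H₀ = (⊤ : SimpleGraph (Fin 4)) ∨
      ∃ a b : Fin 4, a ≠ b ∧ H₀ = (⊤ : SimpleGraph (Fin 4)).deleteEdges {s(a, b)})
    {W : Type} {G : SimpleGraph W} (h : AttachCycles H₀ G) : ContainsAlmostK4 G := by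
  obtain ⟨e, he, hadj⟩ := h.exists_embedding
  rcases hH₀ with rfl | ⟨a, b, hab, rfl⟩
  · exact ⟨e, he, fun i j hij _ => hadj i j hij⟩
  · obtain ⟨σ, rfl, rfl⟩ : ∃ σ : Equiv.Perm (Fin 4), σ 0 = a ∧ σ 3 = b := by
      clear hadj h
      revert a b
      decide
    refine ⟨e ∘ σ, he.comp σ.injective, fun i j hij hne => hadj _ _ ?_⟩
    rw [SimpleGraph.deleteEdges_adj]
    refine ⟨σ.injective.ne hij, fun hmem => hne ?_⟩
    simpa using hmem

lemma ContainsAlmostK4.posSemidef_map {W : Type*} [Fintype W] {G : SimpleGraph W}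
    (hG : ContainsAlmostK4 G) {f : ℝ → ℝ} {I : Set ℝ} (hI : (0 : ℝ) ∈ I)
    (h : ∀ B ∈ PsetG G I, B.map f ∈ PsetG G univ) {A : Matrix (Fin 4) (Fin 4) ℝ}
    (hA : A.PosSemidef) (hAI : ∀ i j, A i j ∈ I) (hA03 : A 0 3 = 0) :
    (A.map f).PosSemidef := by
  obtain ⟨e, he, hadj⟩ := hG
  obtain ⟨B, hB, rfl, hsupp⟩ := exists_posSemidef_extension he hA
  refine (h B ⟨hB, fun u v => ?_, fun u v huv hn => ?_⟩).1.submatrix e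
  · by_cases h0 : B u v = 0
    · rwa [h0]
    · obtain ⟨⟨i, rfl⟩, ⟨j, rfl⟩⟩ := hsupp u v h0
      exact hAI i j
  · by_contra h0
    obtain ⟨⟨i, rfl⟩, ⟨j, rfl⟩⟩ := hsupp u v h0
    by_cases hij : s(i, j) = s(0, 3)
    · rcases Sym2.eq_iff.1 hij with ⟨rfl, rfl⟩ | ⟨rfl, rfl⟩
      · exact h0 hA03
      · exact h0 ((hB.symm_apply _ _).trans hA03)
    · exact hn (hadj i j (fun h => huv (congrArg e h)) hij)

lemma powEnt_zero (α : ℝ) : powEnt α 0 = 0 := by simp [powEnt]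

lemma powEnt_one (α : ℝ) : powEnt α 1 = 1 := by simp [powEnt]

lemma powEnt_of_pos (α : ℝ) {x : ℝ} (hx : 0 < x) : powEnt α x = x ^ α := by
  simp [powEnt, hx.ne']

lemma psiF_eq_powEnt (α : ℝ) {x : ℝ} (hx : 0 ≤ x) : psiF α x = powEnt α x := by
  rcases hx.eq_or_lt with rfl | hx
  · rw [psiF_zero, powEnt_zero]
  · rw [powEnt_of_pos α hx]
    exact extPow_of_pos true α hx

lemma HsetPsi_subset_HsetG {W : Type*} [Fintype W] (G : SimpleGraph W) :
    HsetPsi G ⊆ HsetG G := by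
  intro α hα A hA
  have h := hα A ⟨hA.1, fun _ _ => mem_univ _, hA.2.2⟩
  have heq : A.map (psiF α) = A.map (powEnt α) := by
    ext i j
    exact psiF_eq_powEnt α (hA.2.1 i j)
  rwa [heq] at h

variable {W : Type*} [Fintype W] {G : SimpleGraph W}

lemma ContainsAlmostK4.two_le_of_mem_HsetPhi (hG : ContainsAlmostK4 G) {α : ℝ}
    (hα : α ∈ HsetPhi G) : 2 ≤ α := by
  have h2 : (0 : ℝ) < √2 := by positivity
  have hs : √2 * √2 = 2 := Real.mul_self_sqrt (by norm_num)
  have hA : (!![√2, 1, -1, 0; 1, √2, 0, 1; -1, 0, √2, 1; 0, 1, 1, √2] :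
      Matrix (Fin 4) (Fin 4) ℝ).PosSemidef := by
    refine posSemidef_iff_sum.2 ⟨fun i j => by fin_cases i <;> fin_cases j <;> rfl, fun x => ?_⟩
    simp [Fin.sum_univ_four]
    have : 0 ≤ √2 * ((x 0 + (√2 / 2) * (x 1 - x 2)) ^ 2 + (x 3 + (√2 / 2) * (x 1 + x 2)) ^ 2) := by
      positivity
    refine this.trans_eq ?_
    linear_combination (x 0 * x 1 - x 0 * x 2 + x 1 * x 3 + x 2 * x 3
      + √2 * (x 1 ^ 2 + x 2 ^ 2) / 2) * hs
  have hM := hG.posSemidef_map (mem_univ _) hα hA (fun _ _ => mem_univ _) rfl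
  have hq := (posSemidef_iff_sum.1 hM).2 ![1, -1, -1, 1]
  have hd : phiF α √2 = √2 ^ α := extPow_of_pos false α h2
  have h1 : phiF α 1 = 1 := by simp [phiF]
  have h1' : phiF α (-1) = 1 := by simp [phiF]
  simp [Fin.sum_univ_four, hd, h1, h1', phiF_zero] at hq
  by_contra hlt
  have h3 : √2 ^ α < √2 ^ (2 : ℝ) :=
    Real.rpow_lt_rpow_of_exponent_lt (Real.lt_sqrt_of_sq_lt (by norm_num)) (not_le.1 hlt)
  rw [Real.rpow_two, sq, hs] at h3
  linarith

lemma ContainsAlmostK4.one_le_of_mem_HsetG (hG : ContainsAlmostK4 G) {α : ℝ}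
    (hα : α ∈ HsetG G) : 1 ≤ α := by
  have hA : (!![1, 1, 0, 0; 1, 2, 0, 1; 0, 0, 0, 0; 0, 1, 0, 1] :
      Matrix (Fin 4) (Fin 4) ℝ).PosSemidef := by
    refine posSemidef_iff_sum.2 ⟨fun i j => by fin_cases i <;> fin_cases j <;> rfl, fun x => ?_⟩
    simp [Fin.sum_univ_four]
    nlinarith [sq_nonneg (x 0 + x 1), sq_nonneg (x 1 + x 3)]
  have hM := hG.posSemidef_map self_mem_Ici hα hA
    (fun i j => by fin_cases i <;> fin_cases j <;> simp) rfl
  have hq := (posSemidef_iff_sum.1 hM).2 ![1, -1, 0, 1]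
  simp [Fin.sum_univ_four, powEnt_zero, powEnt_one, powEnt_of_pos α two_pos] at hq
  by_contra hlt
  have h3 : (2 : ℝ) ^ α < 2 ^ (1 : ℝ) :=
    Real.rpow_lt_rpow_of_exponent_lt one_lt_two (not_le.1 hlt)
  rw [Real.rpow_one] at h3
  linarith

lemma exists_pos_two_mul_rpow_add_lt {β γ δ : ℝ} (hβ : 0 < β) (hδ : 0 < δ) :
    ∃ ε : ℝ, 0 < ε ∧ 2 * ε ^ β + γ * ε ^ 2 < δ := by
  have hc : ContinuousAt (fun ε : ℝ => 2 * ε ^ β + γ * ε ^ 2) 0 :=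
    ((continuousAt_id.rpow_const (Or.inr hβ.le)).const_mul 2).add
      ((continuousAt_id.pow 2).const_mul γ)
  have h0 : (2 * (0 : ℝ) ^ β + γ * 0 ^ 2) < δ := by simpa [Real.zero_rpow hβ.ne'] using hδ
  have h1 := (hc.tendsto.mono_left (nhdsWithin_le_nhds (s := Ioi 0))).eventually_lt_const h0
  obtain ⟨ε, h2, h3⟩ := (h1.and self_mem_nhdsWithin).exists
  exact ⟨ε, h3, h2⟩

lemma ContainsAlmostK4.notMem_HsetG (hG : ContainsAlmostK4 G) {α : ℝ} (h1 : 1 < α) (h2 : α < 2) :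
    α ∉ HsetG G := by
  intro hα
  have h2α : (2 : ℝ) ^ α < 2 + α := by
    have := rpow_one_add_le_one_add_mul_self (s := 1) (by norm_num)
      (sub_nonneg.2 h1.le) (by linarith : α - 1 ≤ 1)
    rw [one_add_one_eq_two, Real.rpow_sub_one two_ne_zero] at this
    linarith
  obtain ⟨ε, hε, hsmall⟩ := exists_pos_two_mul_rpow_add_lt (β := α - 1) (γ := α - 1)
    (δ := 2 + α - 2 ^ α) (by linarith) (by linarith)
  have hA : (!![1, 1, 1, 0; 1, 2, 1 + ε, 1; 1, 1 + ε, 1 + ε ^ 2, ε; 0, 1, ε, 1] :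
      Matrix (Fin 4) (Fin 4) ℝ).PosSemidef := by
    refine posSemidef_iff_sum.2 ⟨fun i j => by fin_cases i <;> fin_cases j <;> rfl, fun x => ?_⟩
    simp [Fin.sum_univ_four]
    nlinarith [sq_nonneg (x 0 + x 1 + x 2), sq_nonneg (x 3 + x 1 + ε * x 2)]
  have hM := hG.posSemidef_map self_mem_Ici hα hA
    (fun i j => by fin_cases i <;> fin_cases j <;> simp <;> positivity) rfl
  have hq := (posSemidef_iff_sum.1 hM).2 ![1 - ε, ε, -1, ε ^ α - ε]
  simp [Fin.sum_univ_four, powEnt_zero, powEnt_one, powEnt_of_pos α two_pos,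
    powEnt_of_pos α hε, powEnt_of_pos α (by positivity : 0 < 1 + ε),
    powEnt_of_pos α (by positivity : 0 < 1 + ε ^ 2)] at hq
  have hb1 := one_add_mul_self_le_rpow_one_add (s := ε) (by linarith) h1.le
  have hb2 : (1 + ε ^ 2) ^ α ≤ (1 + ε ^ 2) * (1 + (α - 1) * ε ^ 2) := by
    have hp : 0 < 1 + ε ^ 2 := by positivity
    have := rpow_one_add_le_one_add_mul_self (s := ε ^ 2) (by nlinarith)
      (sub_nonneg.2 h1.le) (by linarith : α - 1 ≤ 1)
    rw [Real.rpow_sub_one hp.ne', div_le_iff₀ hp] at this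
    linarith
  have hb3 : ε ^ α = ε * ε ^ (α - 1) := by
    rw [Real.rpow_sub_one hε.ne']
    field_simp
  have hb4 : ε ^ 2 * (2 * ε ^ (α - 1) + (α - 1) * ε ^ 2) < ε ^ 2 * (2 + α - 2 ^ α) := by
    gcongr
  have hb5 : ε * (1 + α * ε) ≤ ε * (1 + ε) ^ α := by gcongr
  nlinarith [sq_nonneg (ε ^ α)]

end Counterexamples

section Main

variable {W : Type} [Fintype W] {G : SimpleGraph W} {H₀ : SimpleGraph (Fin 4)}

lemma PreservesPattern.map_mem_PsetG {f : ℝ → ℝ} (hf : f 0 = 0) (h : PreservesPattern f G)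
    {A : Matrix W W ℝ} {I : Set ℝ} (hA : A ∈ PsetG G I) : A.map f ∈ PsetG G univ :=
  ⟨h A hA.1 hA.2.2, fun _ _ => mem_univ _, fun i j hij hn => by simp [hA.2.2 i j hij hn, hf]⟩

lemma AttachCycles.mem_HsetPsi (h : AttachCycles H₀ G) {α : ℝ} (hα : 2 ≤ α) : α ∈ HsetPsi G :=
  fun _ hA => (h.preservesPattern_of_two_le hα true).map_mem_PsetG (psiF_zero α) hA

lemma AttachCycles.mem_HsetPhi (h : AttachCycles H₀ G) {α : ℝ} (hα : 2 ≤ α) : α ∈ HsetPhi G :=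
  fun _ hA => (h.preservesPattern_of_two_le hα false).map_mem_PsetG (phiF_zero α) hA

lemma one_mem_HsetPsi (G : SimpleGraph W) : (1 : ℝ) ∈ HsetPsi G := by
  intro A hA
  have : A.map (psiF 1) = A := by
    ext i j
    have := mul_abs_rpow_sub_one 1 (A i j)
    simpa [extPow] using this.symm
  rwa [this]

lemma isLeast_CEset {H : Set ℝ} (h1 : Ici 2 ⊆ H) (h2 : ∀ α, 1 < α → α < 2 → α ∉ H) :
    IsLeast (CEset H) 2 := by
  refine ⟨fun β hβ => h1 hβ, fun α hα => ?_⟩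
  by_contra hlt
  exact h2 (max α (3 / 2)) (lt_max_of_lt_right (by norm_num))
    (max_lt (not_le.1 hlt) (by norm_num)) (hα _ (le_max_left _ _))

lemma eq_one_or_two_le_of_mem_posNats {α : ℝ} (h : α ∈ posNats) : α = 1 ∨ 2 ≤ α := by
  obtain ⟨k, hk, rfl⟩ := h
  rcases (Nat.succ_le_of_lt hk).eq_or_lt with rfl | hk
  · simp
  · exact Or.inr (by exact_mod_cast hk)

lemma oddNats_subset_posNats : oddNats ⊆ posNats := by
  rintro _ ⟨k, hk, rfl⟩
  refine ⟨2 * k - 1, by omega, ?_⟩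
  rw [Nat.cast_sub (by omega)]
  simp

lemma two_le_of_mem_evenNats {α : ℝ} (h : α ∈ evenNats) : 2 ≤ α := by
  obtain ⟨k, hk, rfl⟩ := h
  have : (1 : ℝ) ≤ k := by exact_mod_cast hk
  linarith

lemma one_mem_oddNats : (1 : ℝ) ∈ oddNats := ⟨1, one_pos, by norm_num⟩

end Main

/-- **Proposition 4.9**: if `H₀ = K_4` or `K_4^{(1)}` and `H_m` is obtained from `H₀` by
repeatedly attaching cycles along common edges, then `H_{H_m} = ℕ ∪ [2,∞)`,
`H^ψ_{H_m} = (−1+2ℕ) ∪ [2,∞)`, `H^φ_{H_m} = 2ℕ ∪ [2,∞)`; in particular all three critical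
exponents equal `2`. -/
theorem Hsets_cycle_attachments (H₀ : SimpleGraph (Fin 4))
    (hH₀ : H₀ = (⊤ : SimpleGraph (Fin 4)) ∨
      ∃ a b : Fin 4, a ≠ b ∧ H₀ = (⊤ : SimpleGraph (Fin 4)).deleteEdges {s(a, b)})
    {W : Type} [Fintype W] [DecidableEq W] (G : SimpleGraph W)
    (hbuilt : AttachCycles H₀ G) :
    HsetG G = posNats ∪ Ici (2 : ℝ) ∧
    HsetPsi G = oddNats ∪ Ici (2 : ℝ) ∧
    HsetPhi G = evenNats ∪ Ici (2 : ℝ) ∧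
    IsLeast (CEset (HsetG G)) 2 ∧
    IsLeast (CEset (HsetPsi G)) 2 ∧
    IsLeast (CEset (HsetPhi G)) 2 := by
  have hK := hbuilt.containsAlmostK4 hH₀
  have hsub := HsetPsi_subset_HsetG G
  have hPsi : Ici 2 ⊆ HsetPsi G := fun α hα => hbuilt.mem_HsetPsi hα
  have hPhi : Ici 2 ⊆ HsetPhi G := fun α hα => hbuilt.mem_HsetPhi hα
  have hG : ∀ α ∈ HsetG G, α = 1 ∨ 2 ≤ α := fun α hα => by
    by_contra! hne
    exact hK.notMem_HsetG (lt_of_le_of_ne (hK.one_le_of_mem_HsetG hα) hne.1.symm) hne.2 hα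
  refine ⟨?_, ?_, ?_, isLeast_CEset (hPsi.trans hsub) fun α h1 h2 => hK.notMem_HsetG h1 h2,
    isLeast_CEset hPsi fun α h1 h2 h => hK.notMem_HsetG h1 h2 (hsub h),
    isLeast_CEset hPhi fun α _ h2 h => h2.not_ge (hK.two_le_of_mem_HsetPhi h)⟩
  · refine Subset.antisymm (fun α hα => ?_) (union_subset (fun α hα => ?_) (hPsi.trans hsub))
    · rcases hG α hα with rfl | h
      · exact Or.inl (oddNats_subset_posNats one_mem_oddNats)
      · exact Or.inr h
    · rcases eq_one_or_two_le_of_mem_posNats hα with rfl | h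
      · exact hsub (one_mem_HsetPsi G)
      · exact hsub (hPsi h)
  · refine Subset.antisymm (fun α hα => ?_) (union_subset (fun α hα => ?_) hPsi)
    · rcases hG α (hsub hα) with rfl | h
      · exact Or.inl one_mem_oddNats
      · exact Or.inr h
    · rcases eq_one_or_two_le_of_mem_posNats (oddNats_subset_posNats hα) with rfl | h
      · exact one_mem_HsetPsi G
      · exact hPsi h
  · exact Subset.antisymm (fun α hα => Or.inr (hK.two_le_of_mem_HsetPhi hα))
      (union_subset (fun α hα => hPhi (two_le_of_mem_evenNats hα)) hPhi)
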